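/- arXiv:1409.8130 — 9 statements merged into one kernel-verified Lean document; each statement's English description precedes it below -/
import Mathlib

section
/- Consider the semi-discretized linear rotating shallow water equations: let Φ : ℝ → (C → ℝ) and U : ℝ → (E → ℝ) be differentiable and satisfy, for all t, Φ'(t) = −φ₀ • D₂.mulVec (U t) and M.mulVec (U' t) = f • W.mulVec (U t) − D̄₁.mulVec (L.mulVec (Φ t)), where D̄₁ = −D₂ᵀ. If L and M are symmetric and W is antisymmetric (Wᵀ = −W), then the discrete energy E(t) = (1/2) ⟪Φ t, L.mulVec (Φ t)⟫ + (φ₀/2) ⟪U t, M.mulVec (U t)⟫ is constant in time. -/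
open Matrix

theorem swe_symm_dot {n : Type*} [Fintype n] (A : Matrix n n ℝ) (hA : Aᵀ = A) (x y : n → ℝ) :
    x ⬝ᵥ A.mulVec y = y ⬝ᵥ A.mulVec x := by
  rw [Matrix.dotProduct_mulVec, ← Matrix.mulVec_transpose, hA, dotProduct_comm]

theorem swe_quad_deriv {n : Type*} [Fintype n] (A : Matrix n n ℝ) (hA : Aᵀ = A)
    (x : ℝ → n → ℝ) (x' : n → ℝ) (t : ℝ) (hx : HasDerivAt x x' t) :
    HasDerivAt (fun t => x t ⬝ᵥ A.mulVec (x t)) (2 * (x t ⬝ᵥ A.mulVec x')) t := by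
  have hc := hasDerivAt_pi.1 hx
  have h1 : ∀ i, HasDerivAt (fun t => A.mulVec (x t) i) (A.mulVec x' i) t := by
    intro i
    simp only [Matrix.mulVec, dotProduct]
    exact HasDerivAt.fun_sum fun j _ => (hc j).const_mul (A i j)
  have h2 : HasDerivAt (fun t => x t ⬝ᵥ A.mulVec (x t))
      (∑ i, (x' i * A.mulVec (x t) i + x t i * A.mulVec x' i)) t := by
    simp only [dotProduct]
    exact HasDerivAt.fun_sum fun i _ => (hc i).mul (h1 i)
  convert h2 using 1
  rw [Finset.sum_add_distrib]
  change _ = x' ⬝ᵥ A.mulVec (x t) + x t ⬝ᵥ A.mulVec x'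
  rw [swe_symm_dot A hA x' (x t)]
  ring

/-- Energy conservation for the semi-discrete linear rotating shallow water
equations: if `L`, `M` are symmetric mass matrices, `W` is antisymmetric,
and `(Φ, U)` solve `Φ' = -φ₀ • D₂ U`, `M U' = f • W U - D̄₁ L Φ` with
`D̄₁ = -D₂ᵀ`, then the discrete energy
`E(t) = ½ ⟪Φ, L Φ⟫ + (φ₀/2) ⟪U, M U⟫` is constant in time. -/
theorem energy_conservation_linear_swe
    {C E : Type*} [Fintype C] [Fintype E]
    (D₂ : Matrix C E ℝ) (L : Matrix C C ℝ) (M W : Matrix E E ℝ)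
    (φ₀ f : ℝ) (hφ₀ : 0 < φ₀)
    (hL : Lᵀ = L) (hM : Mᵀ = M) (hW : Wᵀ = -W)
    (Φ : ℝ → C → ℝ) (U : ℝ → E → ℝ) (Φd : ℝ → C → ℝ) (Ud : ℝ → E → ℝ)
    (hΦdiff : ∀ t : ℝ, HasDerivAt Φ (Φd t) t)
    (hUdiff : ∀ t : ℝ, HasDerivAt U (Ud t) t)
    (hΦeq : ∀ t : ℝ, Φd t = -(φ₀ • D₂.mulVec (U t)))
    (hUeq : ∀ t : ℝ, M.mulVec (Ud t) =
      f • W.mulVec (U t) - (-D₂ᵀ).mulVec (L.mulVec (Φ t))) :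
    ∀ t s : ℝ,
      (1 / 2) * (Φ t ⬝ᵥ L.mulVec (Φ t)) + (φ₀ / 2) * (U t ⬝ᵥ M.mulVec (U t)) =
      (1 / 2) * (Φ s ⬝ᵥ L.mulVec (Φ s)) + (φ₀ / 2) * (U s ⬝ᵥ M.mulVec (U s)) := by
  have hWz : ∀ u : E → ℝ, u ⬝ᵥ W.mulVec u = 0 := by
    intro u
    have h : u ⬝ᵥ W.mulVec u = -(u ⬝ᵥ W.mulVec u) := by
      conv_lhs => rw [Matrix.dotProduct_mulVec, ← Matrix.mulVec_transpose, hW, dotProduct_comm,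
        Matrix.neg_mulVec, dotProduct_neg]
    linarith
  have hd : ∀ t, HasDerivAt (fun t => (1 / 2) * (Φ t ⬝ᵥ L.mulVec (Φ t)) +
      (φ₀ / 2) * (U t ⬝ᵥ M.mulVec (U t))) 0 t := by
    intro t
    have h := ((swe_quad_deriv L hL Φ _ t (hΦdiff t)).const_mul (1 / 2)).fun_add
      ((swe_quad_deriv M hM U _ t (hUdiff t)).const_mul (φ₀ / 2))
    refine h.congr_deriv ?_
    have e : U t ⬝ᵥ D₂ᵀ.mulVec (L.mulVec (Φ t)) = D₂.mulVec (U t) ⬝ᵥ L.mulVec (Φ t) := by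
      rw [Matrix.dotProduct_mulVec, Matrix.vecMul_transpose]
    rw [swe_symm_dot L hL, hΦeq, hUeq, Matrix.neg_mulVec, sub_neg_eq_add, dotProduct_add,
      dotProduct_smul, hWz, e, neg_dotProduct, smul_dotProduct]
    simp only [smul_eq_mul]
    ring
  intro t s
  exact is_const_of_deriv_eq_zero (fun t => (hd t).differentiableAt) (fun t => (hd t).deriv) t s
end

section
/- Existence of steady discrete geostrophic modes: assume D₂ D₁ = 0, W is antisymmetric (Wᵀ = −W), L is invertible, and the identity −D₁ᵀ W = R D₂ holds. Then for every stream function vector Ψ : V → ℝ, the fields U := −D₁.mulVec Ψ and Φ := f • L⁻¹.mulVec (Rᵀ.mulVec Ψ) satisfy both D₂.mulVec U = 0 and f • W.mulVec U − D̄₁.mulVec (L.mulVec Φ) = 0, where D̄₁ = −D₂ᵀ; hence the constant-in-time pair (Φ, U) is a steady solution of the semi-discrete linear rotating shallow water equations Φ' = −φ₀ • D₂.mulVec U, M.mulVec U' = f • W.mulVec U − D̄₁.mulVec (L.mulVec Φ). -/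
open Matrix

/-- Existence of steady discrete geostrophic modes: assuming `D₂ D₁ = 0`,
antisymmetry of `W`, invertibility of `L` and the discrete Coriolis (TRiSK)
identity `-D₁ᵀ W = R D₂`, for every stream function `Ψ` the fields
`U = -D₁ Ψ` and `Φ = f • L⁻¹ Rᵀ Ψ` are nondivergent and in discrete
geostrophic balance, and the constant-in-time pair `(Φ, U)` is a steady
solution of the semi-discrete linear rotating shallow water equations. -/
theorem steady_geostrophic_modes
    {C E V : Type*} [Fintype C] [Fintype E] [Fintype V] [DecidableEq C]
    (D₂ : Matrix C E ℝ) (D₁ : Matrix E V ℝ) (L : Matrix C C ℝ)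
    (M W : Matrix E E ℝ) (R : Matrix V C ℝ) (f φ₀ : ℝ)
    (hDD : D₂ * D₁ = 0) (hW : Wᵀ = -W) (hL : IsUnit L.det)
    (hTRiSK : -(D₁ᵀ * W) = R * D₂) (Ψ : V → ℝ) :
    D₂.mulVec (-(D₁.mulVec Ψ)) = 0 ∧
    f • W.mulVec (-(D₁.mulVec Ψ)) -
      (-D₂ᵀ).mulVec (L.mulVec (f • L⁻¹.mulVec (Rᵀ.mulVec Ψ))) = 0 ∧
    (∀ t : ℝ, HasDerivAt (fun _ : ℝ => f • L⁻¹.mulVec (Rᵀ.mulVec Ψ))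
        (-(φ₀ • D₂.mulVec (-(D₁.mulVec Ψ)))) t) ∧
    (∀ t : ℝ, HasDerivAt (fun _ : ℝ => M.mulVec (-(D₁.mulVec Ψ)))
        (f • W.mulVec (-(D₁.mulVec Ψ)) -
          (-D₂ᵀ).mulVec (L.mulVec (f • L⁻¹.mulVec (Rᵀ.mulVec Ψ)))) t) := by
  have hT : W * D₁ = D₂ᵀ * Rᵀ := by
    have h := congrArg Matrix.transpose hTRiSK
    simpa [Matrix.transpose_mul, hW] using h
  have h1 : D₂.mulVec (-(D₁.mulVec Ψ)) = 0 := by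
    rw [Matrix.mulVec_neg, Matrix.mulVec_mulVec, hDD, Matrix.zero_mulVec, neg_zero]
  have h2 : f • W.mulVec (-(D₁.mulVec Ψ)) -
      (-D₂ᵀ).mulVec (L.mulVec (f • L⁻¹.mulVec (Rᵀ.mulVec Ψ))) = 0 := by
    have hLL : L.mulVec (L⁻¹.mulVec (Rᵀ.mulVec Ψ)) = Rᵀ.mulVec Ψ := by
      rw [Matrix.mulVec_mulVec, Matrix.mul_nonsing_inv L hL, Matrix.one_mulVec]
    rw [Matrix.mulVec_smul, hLL, Matrix.mulVec_smul, Matrix.neg_mulVec, Matrix.mulVec_neg,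
      Matrix.mulVec_mulVec, Matrix.mulVec_mulVec, hT, sub_self]
  refine ⟨h1, h2, fun t => ?_, fun t => ?_⟩
  · rw [h1, smul_zero, neg_zero]
    exact hasDerivAt_const t _
  · rw [h2]
    exact hasDerivAt_const t _
end

section
/- No spurious vorticity generation: assume D₂ D₁ = 0 and the identity −D₁ᵀ W = R D₂. Then for every Ψ : V → ℝ and every Φ : C → ℝ, one has D₁ᵀ.mulVec ( f • W.mulVec (D₁.mulVec Ψ) + D̄₁.mulVec (L.mulVec Φ) ) = 0, where D̄₁ = −D₂ᵀ. In particular, for a nondivergent velocity U = −D₁.mulVec Ψ, neither the Coriolis term f • W.mulVec U nor the pressure gradient term −D̄₁.mulVec (L.mulVec Φ) contributes to the tendency of the discrete relative vorticity N Ξ = D̄₂ M U (with D̄₂ = D₁ᵀ). -/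
open Matrix

/-- No spurious vorticity generation: assuming `D₂ D₁ = 0` and the discrete
Coriolis (TRiSK) identity `-D₁ᵀ W = R D₂`, for any stream function `Ψ` and
any geopotential `Φ`, neither the Coriolis term acting on the nondivergent
velocity `U = -D₁ Ψ` nor the pressure gradient term contributes to the
discrete vorticity tendency: `D̄₂ (f • W (D₁ Ψ) + D̄₁ (L Φ)) = 0`, where
`D̄₁ = -D₂ᵀ` and `D̄₂ = D₁ᵀ`. -/
theorem no_spurious_vorticity_generation
    {C E V : Type*} [Fintype C] [Fintype E] [Fintype V]
    (D₂ : Matrix C E ℝ) (D₁ : Matrix E V ℝ) (L : Matrix C C ℝ)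
    (W : Matrix E E ℝ) (R : Matrix V C ℝ) (f : ℝ)
    (hDD : D₂ * D₁ = 0) (hTRiSK : -(D₁ᵀ * W) = R * D₂) :
    ∀ (Ψ : V → ℝ) (Φ : C → ℝ),
      D₁ᵀ.mulVec (f • W.mulVec (D₁.mulVec Ψ) +
        (-D₂ᵀ).mulVec (L.mulVec Φ)) = 0 := by
  intro Ψ Φ
  have h1 : D₁ᵀ * W = -(R * D₂) := by rw [← hTRiSK, neg_neg]
  have h2 : D₁ᵀ * W * D₁ = 0 := by
    rw [h1, Matrix.neg_mul, Matrix.mul_assoc, hDD, Matrix.mul_zero, neg_zero]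
  have h3 : D₁ᵀ * D₂ᵀ = 0 := by
    rw [← Matrix.transpose_mul, hDD, Matrix.transpose_zero]
  rw [Matrix.mulVec_add, Matrix.mulVec_smul, Matrix.mulVec_mulVec, Matrix.mulVec_mulVec,
    h2, Matrix.neg_mulVec, Matrix.mulVec_neg, Matrix.mulVec_mulVec (L.mulVec Φ), h3]
  simp
end

section
/- Time-independence of the linearized potential vorticity: assume D₂ D₁ = 0, N is invertible, and the identity −D₁ᵀ W = R D₂ holds. Let Φ : ℝ → (C → ℝ) and U : ℝ → (E → ℝ) be differentiable solutions of the semi-discrete linear equations Φ'(t) = −φ₀ • D₂.mulVec (U t) and M.mulVec (U' t) = f • W.mulVec (U t) − D̄₁.mulVec (L.mulVec (Φ t)), where D̄₁ = −D₂ᵀ. Define the discrete relative vorticity Ξ(t) := N⁻¹.mulVec (D̄₂.mulVec (M.mulVec (U t))) with D̄₂ = D₁ᵀ, and the averaged mass field Φ̃(t) := N⁻¹.mulVec (R.mulVec (Φ t)). Then the function t ↦ φ₀ • Ξ(t) − f • Φ̃(t) is constant; equivalently the linearized potential vorticity Ξ/φ₀ − f Φ̃/φ₀² is independent of time. -/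
open Matrix

theorem hasDerivAt_mulVec_aux {A B : Type*} [Fintype A] [Fintype B] (P : Matrix A B ℝ)
    {u : ℝ → B → ℝ} {u' : B → ℝ} {t : ℝ} (h : HasDerivAt u u' t) :
    HasDerivAt (fun t => P.mulVec (u t)) (P.mulVec u') t := by
  exact (LinearMap.toContinuousLinearMap P.mulVecLin).hasFDerivAt.comp_hasDerivAt t h

/-- Time-independence of the linearized potential vorticity: if `D₂ D₁ = 0`,
`N` is invertible and the TRiSK identity `-D₁ᵀ W = R D₂` holds, then along
any differentiable solution `(Φ, U)` of the semi-discrete linear shallow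
water equations the quantity `φ₀ • Ξ - f • Φ̃` is constant in time, where
`Ξ = N⁻¹ D̄₂ M U` is the discrete relative vorticity (`D̄₂ = D₁ᵀ`) and
`Φ̃ = N⁻¹ R Φ` is the averaged mass field; equivalently the linearized PV
`Ξ/φ₀ - f Φ̃/φ₀²` is independent of time. -/
theorem linearized_pv_time_independent
    {C E V : Type*} [Fintype C] [Fintype E] [Fintype V] [DecidableEq V]
    (D₂ : Matrix C E ℝ) (D₁ : Matrix E V ℝ)
    (L : Matrix C C ℝ) (M : Matrix E E ℝ) (N : Matrix V V ℝ)
    (W : Matrix E E ℝ) (R : Matrix V C ℝ) (φ₀ f : ℝ) (hφ₀ : φ₀ ≠ 0)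
    (hDD : D₂ * D₁ = 0) (hN : IsUnit N.det) (hTRiSK : -(D₁ᵀ * W) = R * D₂)
    (Φ : ℝ → C → ℝ) (U : ℝ → E → ℝ) (Φd : ℝ → C → ℝ) (Ud : ℝ → E → ℝ)
    (hΦdiff : ∀ t : ℝ, HasDerivAt Φ (Φd t) t)
    (hUdiff : ∀ t : ℝ, HasDerivAt U (Ud t) t)
    (hΦeq : ∀ t : ℝ, Φd t = -(φ₀ • D₂.mulVec (U t)))
    (hUeq : ∀ t : ℝ, M.mulVec (Ud t) =
      f • W.mulVec (U t) - (-D₂ᵀ).mulVec (L.mulVec (Φ t))) :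
    ∀ t s : ℝ,
      φ₀ • N⁻¹.mulVec (D₁ᵀ.mulVec (M.mulVec (U t))) -
        f • N⁻¹.mulVec (R.mulVec (Φ t)) =
      φ₀ • N⁻¹.mulVec (D₁ᵀ.mulVec (M.mulVec (U s))) -
        f • N⁻¹.mulVec (R.mulVec (Φ s)) := by
  have key : ∀ t : ℝ, HasDerivAt (fun t => φ₀ • N⁻¹.mulVec (D₁ᵀ.mulVec (M.mulVec (U t))) -
        f • N⁻¹.mulVec (R.mulVec (Φ t))) 0 t := by
    intro t
    have h1 := (hasDerivAt_mulVec_aux N⁻¹ (hasDerivAt_mulVec_aux D₁ᵀ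
      (hasDerivAt_mulVec_aux M (hUdiff t)))).const_smul φ₀
    have h2 := (hasDerivAt_mulVec_aux N⁻¹ (hasDerivAt_mulVec_aux R (hΦdiff t))).const_smul f
    refine (h1.sub h2).congr_deriv ?_
    have hT : D₁ᵀ * D₂ᵀ = 0 := by rw [← Matrix.transpose_mul, hDD, Matrix.transpose_zero]
    have e1 : D₁ᵀ.mulVec (M.mulVec (Ud t)) = -(f • R.mulVec (D₂.mulVec (U t))) := by
      rw [hUeq, Matrix.mulVec_sub, Matrix.mulVec_smul, Matrix.neg_mulVec, Matrix.mulVec_neg,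
        Matrix.mulVec_mulVec, Matrix.mulVec_mulVec (L.mulVec (Φ t)), hT, Matrix.zero_mulVec,
        Matrix.mulVec_mulVec, ← hTRiSK, Matrix.neg_mulVec]
      simp
    rw [e1, hΦeq]
    simp only [Matrix.mulVec_neg, Matrix.mulVec_smul, smul_neg]
    rw [smul_comm φ₀ f]
    simp
  intro t s
  exact is_const_of_deriv_eq_zero (fun x => (key x).differentiableAt) (fun x => (key x).deriv) t s
end

section
/- Orthogonality of the rotational and weak-gradient parts: let M : Matrix E E ℝ be symmetric positive definite and suppose D₂ D₁ = 0. If v : E → ℝ satisfies M.mulVec v = D₂ᵀ.mulVec x for some x : C → ℝ and also v = D₁.mulVec ψ for some ψ : V → ℝ, then v = 0. -/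
open Matrix

/-- Orthogonality of the rotational and weak-gradient parts: if `M` is
symmetric positive definite, `D₂ D₁ = 0`, and the vector `v` is both a weak
gradient (`M v = D₂ᵀ x`) and rotational (`v = D₁ ψ`), then `v = 0`. -/
theorem rotational_gradient_orthogonality
    {C E V : Type*} [Fintype C] [Fintype E] [Fintype V] [DecidableEq E]
    (D₂ : Matrix C E ℝ) (D₁ : Matrix E V ℝ) (M : Matrix E E ℝ)
    (hM : M.PosDef) (hDD : D₂ * D₁ = 0)
    (v : E → ℝ) (x : C → ℝ) (ψ : V → ℝ)
    (hv : M.mulVec v = D₂ᵀ.mulVec x) (hvψ : v = D₁.mulVec ψ) :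
    v = 0 := by
  by_contra hne
  have hpos := hM.dotProduct_mulVec_pos hne
  have hD : D₂ *ᵥ v = 0 := by
    rw [hvψ, mulVec_mulVec, hDD, zero_mulVec]
  rw [hv, star_trivial, dotProduct_mulVec, vecMul_transpose, hD, zero_dotProduct] at hpos
  exact lt_irrefl _ hpos
end

section
/- Discrete Helmholtz decomposition: let M : Matrix E E ℝ be symmetric positive definite, L : Matrix C C ℝ invertible, and suppose D₂ D₁ = 0 together with the exactness condition that the kernel of the linear map u ↦ D₂.mulVec u is contained in the range of the linear map ψ ↦ D₁.mulVec ψ. Then every U : E → ℝ can be decomposed as U = M⁻¹.mulVec (D̄₁.mulVec (L.mulVec Φ)) − D₁.mulVec Ψ for some Φ : C → ℝ and Ψ : V → ℝ, where D̄₁ = −D₂ᵀ; i.e., every discrete vector field is the sum of a discrete weak-gradient (divergent) part and a discrete rotational part. -/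
open Matrix

/-- Discrete Helmholtz decomposition: if `M` is symmetric positive definite,
`L` is invertible, `D₂ D₁ = 0`, and every discretely nondivergent field has
a stream function (exactness: `ker (D₂ ·) ⊆ range (D₁ ·)`), then every
discrete velocity field `U` decomposes into a weak-gradient (divergent)
part and a rotational part: `U = M⁻¹ (D̄₁ (L Φ)) - D₁ Ψ` with `D̄₁ = -D₂ᵀ`. -/
theorem discrete_helmholtz_decomposition
    {C E V : Type*} [Fintype C] [Fintype E] [Fintype V]
    [DecidableEq C] [DecidableEq E]
    (D₂ : Matrix C E ℝ) (D₁ : Matrix E V ℝ)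
    (L : Matrix C C ℝ) (M : Matrix E E ℝ)
    (hM : M.PosDef) (hL : IsUnit L.det) (hDD : D₂ * D₁ = 0)
    (hExact : ∀ u : E → ℝ, D₂.mulVec u = 0 → ∃ ψ : V → ℝ, u = D₁.mulVec ψ) :
    ∀ U : E → ℝ, ∃ (Φ : C → ℝ) (Ψ : V → ℝ),
      U = M⁻¹.mulVec ((-D₂ᵀ).mulVec (L.mulVec Φ)) - D₁.mulVec Ψ := by
  intro U
  have hN : (M⁻¹).PosDef := hM.inv
  have hker : LinearMap.ker (D₂ * M⁻¹ * D₂ᵀ).mulVecLin = LinearMap.ker D₂ᵀ.mulVecLin := by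
    ext x
    simp only [LinearMap.mem_ker, Matrix.mulVecLin_apply]
    constructor
    · intro h
      by_contra hne
      have h1 := hN.dotProduct_mulVec_pos hne
      have h2 : x ⬝ᵥ ((D₂ * M⁻¹ * D₂ᵀ) *ᵥ x) = 0 := by rw [h]; simp
      rw [← Matrix.mulVec_mulVec, ← Matrix.mulVec_mulVec, Matrix.dotProduct_mulVec,
        ← Matrix.mulVec_transpose] at h2
      rw [star_trivial, h2] at h1
      exact lt_irrefl _ h1
    · intro h
      rw [← Matrix.mulVec_mulVec, h, Matrix.mulVec_zero]
  have hle : LinearMap.range (D₂ * M⁻¹ * D₂ᵀ).mulVecLin ≤ LinearMap.range D₂.mulVecLin := by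
    rintro _ ⟨x, rfl⟩
    refine ⟨M⁻¹ *ᵥ (D₂ᵀ *ᵥ x), ?_⟩
    simp only [Matrix.mulVecLin_apply, Matrix.mulVec_mulVec, Matrix.mul_assoc]
  have hrank : Module.finrank ℝ (LinearMap.range (D₂ * M⁻¹ * D₂ᵀ).mulVecLin)
      = Module.finrank ℝ (LinearMap.range D₂.mulVecLin) := by
    have h1 := LinearMap.finrank_range_add_finrank_ker (D₂ * M⁻¹ * D₂ᵀ).mulVecLin
    have h2 := LinearMap.finrank_range_add_finrank_ker D₂ᵀ.mulVecLin
    have h3 : Module.finrank ℝ (LinearMap.range D₂ᵀ.mulVecLin)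
      = Module.finrank ℝ (LinearMap.range D₂.mulVecLin) := Matrix.rank_transpose D₂
    rw [hker] at h1
    omega
  have heq := Submodule.eq_of_le_of_finrank_eq hle hrank
  have hmem : D₂ *ᵥ U ∈ LinearMap.range (D₂ * M⁻¹ * D₂ᵀ).mulVecLin := by
    rw [heq]
    exact ⟨U, rfl⟩
  obtain ⟨w, hw⟩ := hmem
  rw [Matrix.mulVecLin_apply, ← Matrix.mulVec_mulVec, ← Matrix.mulVec_mulVec] at hw
  obtain ⟨ψ, hψ⟩ := hExact (U - M⁻¹ *ᵥ (D₂ᵀ *ᵥ w)) (by rw [Matrix.mulVec_sub, hw, sub_self])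
  refine ⟨L⁻¹ *ᵥ (-w), -ψ, ?_⟩
  rw [Matrix.mulVec_mulVec _ L, Matrix.mul_nonsing_inv L hL, Matrix.one_mulVec,
    Matrix.neg_mulVec_neg, Matrix.mulVec_neg, ← hψ]
  abel
end

section
/- Dual mass evolution equation: assume J is invertible, −D̄₂ W = R D₂ (the discrete Coriolis identity, with D̄₂ = D₁ᵀ), and D̄₂ H = J D̄₂. Let F : ℝ → (E → ℝ) be a time-dependent primal mass flux, let F̂⊥ : ℝ → (E → ℝ) satisfy H.mulVec (F̂⊥ t) = −W.mulVec (F t) for all t, and let Φ : ℝ → (C → ℝ) be differentiable with Φ'(t) = −D₂.mulVec (F t). Define the dual mass field Φ̄(t) := J⁻¹.mulVec (R.mulVec (Φ t)). Then Φ̄ is differentiable and Φ̄'(t) + D̄₂.mulVec (F̂⊥ t) = 0 for all t; i.e., the dual mass evolves exactly as under a finite volume divergence of the dual mass fluxes. -/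
open Matrix

/-- Dual mass evolution equation: assuming `J` invertible, the discrete
Coriolis identity `-D̄₂ W = R D₂` (with `D̄₂ = D₁ᵀ`), and `D̄₂ H = J D̄₂`,
if the dual mass fluxes satisfy `H F̂⊥ = -W F` and the primal mass obeys
`Φ' = -D₂ F`, then the dual mass field `Φ̄ = J⁻¹ R Φ` is differentiable
and satisfies the finite-volume-form equation `Φ̄' + D̄₂ F̂⊥ = 0`. -/
theorem dual_mass_evolution
    {C E V : Type*} [Fintype C] [Fintype E] [Fintype V] [DecidableEq V]
    (D₂ : Matrix C E ℝ) (D₁ : Matrix E V ℝ)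
    (W H : Matrix E E ℝ) (R : Matrix V C ℝ) (J : Matrix V V ℝ)
    (hJ : IsUnit J.det)
    (hTRiSK : -(D₁ᵀ * W) = R * D₂) (hDH : D₁ᵀ * H = J * D₁ᵀ)
    (F : ℝ → E → ℝ) (Fhatperp : ℝ → E → ℝ) (Φ : ℝ → C → ℝ)
    (hF : ∀ t : ℝ, H.mulVec (Fhatperp t) = -(W.mulVec (F t)))
    (hΦ : ∀ t : ℝ, HasDerivAt Φ (-(D₂.mulVec (F t))) t) :
    ∀ t : ℝ, HasDerivAt (fun s : ℝ => J⁻¹.mulVec (R.mulVec (Φ s)))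
      (-(D₁ᵀ.mulVec (Fhatperp t))) t := by
  intro t
  have key : J *ᵥ (D₁ᵀ *ᵥ Fhatperp t) = R *ᵥ (D₂ *ᵥ F t) := by
    rw [mulVec_mulVec, ← hDH, ← mulVec_mulVec, hF, mulVec_neg, mulVec_mulVec, ← neg_mulVec,
      hTRiSK, mulVec_mulVec]
  have key2 : D₁ᵀ *ᵥ Fhatperp t = J⁻¹ *ᵥ (R *ᵥ (D₂ *ᵥ F t)) := by
    rw [← key, mulVec_mulVec, nonsing_inv_mul J hJ, one_mulVec]
  have h := (LinearMap.toContinuousLinearMap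
    (Matrix.mulVecLin (J⁻¹ * R))).hasFDerivAt.comp_hasDerivAt t (hΦ t)
  rw [key2]
  have e : -(J⁻¹ *ᵥ (R *ᵥ (D₂ *ᵥ F t))) =
      (LinearMap.toContinuousLinearMap (Matrix.mulVecLin (J⁻¹ * R))) (-(D₂ *ᵥ F t)) := by
    simp [mulVec_neg, mulVec_mulVec, Matrix.mul_assoc]
  rw [e]
  refine h.congr_of_eventuallyEq (Filter.Eventually.of_forall fun s => ?_)
  simp [mulVec_mulVec]
end

section
/- Dual potential vorticity evolution equation: assume J is invertible, D₂ D₁ = 0, and D̄₂ H = J D̄₂, where D̄₁ = −D₂ᵀ and D̄₂ = D₁ᵀ. Let U : ℝ → (E → ℝ) be differentiable and satisfy the momentum equation M.mulVec (U' t) = −M.mulVec (Q⊥ t) − D̄₁.mulVec (L.mulVec (S t)) for time-dependent vectors Q⊥ : ℝ → (E → ℝ) and S : ℝ → (C → ℝ), and suppose M.mulVec (Q⊥ t) = H.mulVec (Q̂⊥ t) for all t. Define the dual absolute vorticity Ξ̂(t) := J⁻¹.mulVec (D̄₂.mulVec (M.mulVec (U t))). Then Ξ̂ is differentiable and Ξ̂'(t)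 + D̄₂.mulVec (Q̂⊥ t) = 0 for all t; i.e., the dual vorticity evolves in flux form under the dual-mesh potential vorticity fluxes, consistently with the dual mass equation. -/
open Matrix

/-- Dual potential vorticity evolution equation: assuming `J` invertible,
`D₂ D₁ = 0`, `D̄₂ H = J D̄₂` (with `D̄₁ = -D₂ᵀ`, `D̄₂ = D₁ᵀ`), if the
velocity obeys the momentum equation `M U' = -M Q⊥ - D̄₁ (L S)` and the
PV fluxes are related by `M Q⊥ = H Q̂⊥`, then the dual absolute vorticity
`Ξ̂ = J⁻¹ D̄₂ M U` is differentiable and evolves in flux form: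
`Ξ̂' + D̄₂ Q̂⊥ = 0`. -/
theorem dual_pv_evolution
    {C E V : Type*} [Fintype C] [Fintype E] [Fintype V] [DecidableEq V]
    (D₂ : Matrix C E ℝ) (D₁ : Matrix E V ℝ)
    (L : Matrix C C ℝ) (M H : Matrix E E ℝ) (J : Matrix V V ℝ)
    (hJ : IsUnit J.det) (hDD : D₂ * D₁ = 0) (hDH : D₁ᵀ * H = J * D₁ᵀ)
    (U : ℝ → E → ℝ) (Ud : ℝ → E → ℝ)
    (Qperp Qhatperp : ℝ → E → ℝ) (S : ℝ → C → ℝ)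
    (hUdiff : ∀ t : ℝ, HasDerivAt U (Ud t) t)
    (hmom : ∀ t : ℝ, M.mulVec (Ud t) =
      -(M.mulVec (Qperp t)) - (-D₂ᵀ).mulVec (L.mulVec (S t)))
    (hQ : ∀ t : ℝ, M.mulVec (Qperp t) = H.mulVec (Qhatperp t)) :
    ∀ t : ℝ, HasDerivAt (fun s : ℝ => J⁻¹.mulVec (D₁ᵀ.mulVec (M.mulVec (U s))))
      (-(D₁ᵀ.mulVec (Qhatperp t))) t := by
  intro t
  have hlin : ∀ {m n : Type _} [Fintype m] [Fintype n] (A : Matrix m n ℝ) (f : ℝ → n → ℝ)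
      (f' : n → ℝ), HasDerivAt f f' t → HasDerivAt (fun s => A.mulVec (f s)) (A.mulVec f') t := by
    intro m n _ _ A f f' hf
    exact (LinearMap.toContinuousLinearMap (Matrix.mulVecLin A)).hasFDerivAt.comp_hasDerivAt t hf
  have h0 : D₁ᵀ * D₂ᵀ = 0 := by rw [← Matrix.transpose_mul, hDD, Matrix.transpose_zero]
  have key : J⁻¹.mulVec ((D₁ᵀ * M).mulVec (Ud t)) = -(D₁ᵀ.mulVec (Qhatperp t)) := by
    rw [← Matrix.mulVec_mulVec, hmom, hQ, Matrix.mulVec_sub, Matrix.mulVec_neg,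
      Matrix.mulVec_mulVec, hDH, Matrix.mulVec_mulVec, Matrix.mul_neg, h0, neg_zero,
      Matrix.zero_mulVec, sub_zero, Matrix.mulVec_neg, Matrix.mulVec_mulVec,
      ← Matrix.mul_assoc, Matrix.nonsing_inv_mul _ hJ, Matrix.one_mul]
  rw [← key]
  simp only [Matrix.mulVec_mulVec]
  exact hlin _ _ _ (hUdiff t)
end

section
/- Equivalence of the primal and dual forms of the discrete momentum equation: assume H is invertible and D̄₁ I = H D̄₁, where D̄₁ = −D₂ᵀ. Let U : ℝ → (E → ℝ) be differentiable, define Û(t) := H⁻¹.mulVec (M.mulVec (U t)) (so M U = H Û for all t), and let Q⊥, Q̂⊥ : ℝ → (E → ℝ) and S : ℝ → (C → ℝ), Ŝ : ℝ → (C → ℝ) satisfy M.mulVec (Q⊥ t) = H.mulVec (Q̂⊥ t) and L.mulVec (S t) = I.mulVec (Ŝ t) for all t. Then the primal momentum equation M.mulVec (U' t) + M.mulVec (Q⊥ t) + D̄₁.mulVec (L.mulVec (S t)) = 0 holds for all t if and only if the dual-space form Û'(t) + Q̂⊥ t + D̄₁.mulVec (Ŝ t) = 0 holds for all t. -/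
open Matrix

/-- Equivalence of the primal and dual forms of the discrete momentum
equation: assuming `H` invertible and `D̄₁ I = H D̄₁` (with `D̄₁ = -D₂ᵀ`),
with `Û = H⁻¹ M U`, `M Q⊥ = H Q̂⊥` and `L S = I Ŝ`, the primal momentum
equation `M U' + M Q⊥ + D̄₁ L S = 0` holds for all times if and only if
the equivalent dual-space form `Û' + Q̂⊥ + D̄₁ Ŝ = 0` holds for all times. -/
theorem primal_dual_momentum_equivalence
    {C E : Type*} [Fintype C] [Fintype E] [DecidableEq E]
    (D₂ : Matrix C E ℝ) (L I : Matrix C C ℝ) (M H : Matrix E E ℝ)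
    (hH : IsUnit H.det) (hDI : (-D₂ᵀ) * I = H * (-D₂ᵀ))
    (U : ℝ → E → ℝ) (Ud : ℝ → E → ℝ)
    (Qperp Qhatperp : ℝ → E → ℝ) (S Shat : ℝ → C → ℝ)
    (hUdiff : ∀ t : ℝ, HasDerivAt U (Ud t) t)
    (hQ : ∀ t : ℝ, M.mulVec (Qperp t) = H.mulVec (Qhatperp t))
    (hS : ∀ t : ℝ, L.mulVec (S t) = I.mulVec (Shat t)) :
    (∀ t : ℝ, M.mulVec (Ud t) + M.mulVec (Qperp t) +
        (-D₂ᵀ).mulVec (L.mulVec (S t)) = 0) ↔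
    (∀ t : ℝ, HasDerivAt (fun s : ℝ => H⁻¹.mulVec (M.mulVec (U s)))
        (-(Qhatperp t) - (-D₂ᵀ).mulVec (Shat t)) t) := by
  have hd : ∀ t : ℝ, HasDerivAt (fun s : ℝ => H⁻¹.mulVec (M.mulVec (U s)))
      (H⁻¹.mulVec (M.mulVec (Ud t))) t := by
    intro t
    have h := ((Matrix.mulVecLin H⁻¹ ∘ₗ Matrix.mulVecLin M).toContinuousLinearMap.hasFDerivAt
      (x := U t)).comp_hasDerivAt t (hUdiff t)
    exact h
  have key : ∀ t : ℝ, M.mulVec (Ud t) + M.mulVec (Qperp t) +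
        (-D₂ᵀ).mulVec (L.mulVec (S t)) =
      H.mulVec (H⁻¹.mulVec (M.mulVec (Ud t)) + Qhatperp t + (-D₂ᵀ).mulVec (Shat t)) := by
    intro t
    rw [hQ, hS, Matrix.mulVec_mulVec, hDI, Matrix.mulVec_add, Matrix.mulVec_add,
      Matrix.mulVec_mulVec _ H H⁻¹, Matrix.mul_nonsing_inv _ hH, Matrix.one_mulVec,
      Matrix.mulVec_mulVec]
  have inj : ∀ v : E → ℝ, H.mulVec v = 0 → v = 0 := by
    intro v hv
    have h := congrArg (H⁻¹.mulVec) hv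
    rwa [Matrix.mulVec_mulVec, Matrix.nonsing_inv_mul _ hH, Matrix.one_mulVec,
      Matrix.mulVec_zero] at h
  constructor
  · intro h t
    have h1 := inj _ ((key t).symm.trans (h t))
    have h2 : -(Qhatperp t) - (-D₂ᵀ).mulVec (Shat t) = H⁻¹.mulVec (M.mulVec (Ud t)) := by
      rw [add_assoc] at h1
      rw [eq_neg_of_add_eq_zero_left h1]
      abel
    rw [h2]
    exact hd t
  · intro h t
    rw [key t, (hd t).unique (h t)]
    have h3 : -(Qhatperp t) - (-D₂ᵀ).mulVec (Shat t) + Qhatperp t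
        + (-D₂ᵀ).mulVec (Shat t) = 0 := by abel
    rw [h3, Matrix.mulVec_zero]
end
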